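/- arXiv:2401.07706 — 3 statements merged into one kernel-verified Lean document; each statement's English description precedes it below -/
import Mathlib

section
/- Let τ2 ≥ τ1 ≥ 0. The switched system ẋ(t) = f_{σ(t)}(x(t)) is globally uniformly asymptotically stable (GUAS) on the class S_dw(τ1,τ2) if and only if it is GUAS on the class S*_dw(τ1,τ2). -/
open Filter Set
open scoped Classical

noncomputable section

/-- A switching signal `σ : [0,∞) → {1,…,M}` (piecewise constant, right continuous),
encoded by the (possibly finite) strictly increasing sequence of its switching instants
`T 1 < T 2 < …` (the discontinuity points, with the convention `T 0 = 0`, and `num` the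
extended-natural number of switching instants) together with the value `idx k ∈ Fin M`
taken on the `k`-th inter-switching interval `[T k, T (k+1))`. Beyond the last switching
instant the time sequence is frozen, and if there are infinitely many switching instants
they tend to `+∞`. At each switching instant the value actually changes. -/
structure Signal (M : ℕ) where
  idx : ℕ → Fin M
  T : ℕ → ℝ
  num : ℕ∞
  T0 : T 0 = 0
  mono : ∀ k : ℕ, T k ≤ T (k + 1)
  strict : ∀ k : ℕ, (k : ℕ∞) < num → T k < T (k + 1)
  frozen : ∀ k : ℕ, num ≤ (k : ℕ∞) → T (k + 1) = T k
  change : ∀ k : ℕ, (k : ℕ∞) < num → idx k ≠ idx (k + 1)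
  unbounded : num = ⊤ → Tendsto T atTop atTop

/-- The index of the inter-switching interval containing time `t`. -/
def Signal.seg {M : ℕ} (s : Signal M) (t : ℝ) : ℕ :=
  sSup {k : ℕ | (k : ℕ∞) ≤ s.num ∧ s.T k ≤ t}

/-- Given the flow maps `Φ i` of the subsystems, the state of the switched system at the
`k`-th switching instant, starting from `x` at time `0`. -/
def Signal.state {M : ℕ} {E : Type*} (Φ : Fin M → ℝ → E → E) (s : Signal M) (x : E) : ℕ → E
  | 0 => x
  | k + 1 =>
    if (k : ℕ∞) < s.num then
      Φ (s.idx k) (s.T (k + 1) - s.T k) (Signal.state Φ s x k)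
    else Signal.state Φ s x k

/-- The solution `Φ_σ(t,x)` of the switched system associated to the flow maps `Φ i` of the
subsystems, for the switching signal `s`, starting at `x` (at time `0`), evaluated at time `t`. -/
def Signal.sol {M : ℕ} {E : Type*} (Φ : Fin M → ℝ → E → E) (s : Signal M) (t : ℝ) (x : E) : E :=
  Φ (s.idx (s.seg t)) (t - s.T (s.seg t)) (Signal.state Φ s x (s.seg t))

/-- The class `S_dw(τ1,τ2)`: switching signals with `τ1 ≤ t_k − t_{k−1} ≤ τ2` for every
switching instant `t_k > 0`. -/
def Sdw (M : ℕ) (τ1 τ2 : ℝ) : Set (Signal M) :=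
  {s | ∀ k : ℕ, (k : ℕ∞) < s.num →
    τ1 ≤ s.T (k + 1) - s.T k ∧ s.T (k + 1) - s.T k ≤ τ2}

/-- The class `S*_dw(τ1,τ2)`: switching signals with `τ1 ≤ t_{k+1} − t_k ≤ τ2` for every
switching instant `t_k > 0`, and with `t_1 ≤ τ2`. -/
def SdwStar (M : ℕ) (τ1 τ2 : ℝ) : Set (Signal M) :=
  {s | (∀ k : ℕ, 1 ≤ k → (k : ℕ∞) < s.num →
      τ1 ≤ s.T (k + 1) - s.T k ∧ s.T (k + 1) - s.T k ≤ τ2) ∧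
    (1 ≤ s.num → s.T 1 ≤ τ2)}

/-- A function `α : [0,∞) → [0,∞)` of class `K∞`: continuous, vanishing at `0`,
strictly increasing and unbounded. -/
def ClassKInf (α : ℝ → ℝ) : Prop :=
  ContinuousOn α (Ici 0) ∧ α 0 = 0 ∧ StrictMonoOn α (Ici 0) ∧
    Tendsto α atTop atTop ∧ ∀ r ∈ Ici (0 : ℝ), 0 ≤ α r

/-- A function `β : [0,∞) × [0,∞) → [0,∞)` of class `KL`. -/
def ClassKL (β : ℝ → ℝ → ℝ) : Prop :=
  ContinuousOn (Function.uncurry β) (Ici 0 ×ˢ Ici 0) ∧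
  (∀ s ∈ Ici (0 : ℝ), β 0 s = 0 ∧ StrictMonoOn (fun r => β r s) (Ici 0)) ∧
  (∀ r ∈ Ici (0 : ℝ), AntitoneOn (β r) (Ici 0) ∧ Tendsto (β r) atTop (nhds 0)) ∧
  (∀ r ∈ Ici (0 : ℝ), ∀ s ∈ Ici (0 : ℝ), 0 ≤ β r s)

/-- Global uniform asymptotic stability (GUAS) of the switched system with subsystem flows
`Φ i` over the class `S` of switching signals. -/
def GUAS {M : ℕ} {E : Type*} [NormedAddCommGroup E] (Φ : Fin M → ℝ → E → E)
    (S : Set (Signal M)) : Prop :=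
  ∃ β : ℝ → ℝ → ℝ, ClassKL β ∧
    ∀ s ∈ S, ∀ x : E, ∀ t ≥ (0 : ℝ), ‖Signal.sol Φ s t x‖ ≤ β ‖x‖ t

/-- Uniform exponential stability with decay `ρ` (`ρ`-UES) of the switched system with
subsystem flows `Φ i` over the class `S` of switching signals. -/
def UES {M : ℕ} {E : Type*} [NormedAddCommGroup E] (ρ : ℝ) (Φ : Fin M → ℝ → E → E)
    (S : Set (Signal M)) : Prop :=
  ∃ C : ℝ, 0 ≤ C ∧ ∀ s ∈ S, ∀ x : E, ∀ t ≥ (0 : ℝ),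
    ‖Signal.sol Φ s t x‖ ≤ C * Real.exp (-ρ * t) * ‖x‖

/-!
A signal of `S*_dw(τ1,τ2)` violates the lower dwell bound of `S_dw(τ1,τ2)` at most on its first
interval, so its tail after the first switching instant `t_1` lies in `S_dw(τ1,τ2)`. Constant
signals lie in `S_dw(τ1,τ2)` as well, so a bound `β` for that class controls the first interval:
the state at `t_1` has norm at most `β(|x|, 0)`. As `t_1 ≤ τ2`, restarting the estimate at `t_1`
costs a delay of at most `τ2`, and `β(|x| + β(|x|, 0), max(0, t - τ2))` bounds both phases.
-/

/-- A comparison function `α : [0,∞) → [0,∞)` of class `K`: continuous, strictly increasing and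
vanishing at `0`, hence nonnegative. As for `ClassKL`, values at negative arguments are ignored. -/
def ClassK (α : ℝ → ℝ) : Prop :=
  ContinuousOn α (Ici 0) ∧ α 0 = 0 ∧ StrictMonoOn α (Ici 0)

theorem classK_id : ClassK fun r => r :=
  ⟨continuousOn_id, rfl, strictMonoOn_id⟩

namespace ClassK

variable {α γ : ℝ → ℝ}

theorem nonneg (hα : ClassK α) {r : ℝ} (hr : 0 ≤ r) : 0 ≤ α r :=
  hα.2.1.ge.trans (hα.2.2.monotoneOn self_mem_Ici hr hr)

theorem add (hα : ClassK α) (hγ : ClassK γ) : ClassK fun r => α r + γ r :=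
  ⟨hα.1.add hγ.1, by simp only [hα.2.1, hγ.2.1, add_zero], hα.2.2.add hγ.2.2⟩

end ClassK

namespace ClassKL

variable {β : ℝ → ℝ → ℝ}

theorem classK_left (hβ : ClassKL β) {t : ℝ} (ht : 0 ≤ t) : ClassK fun r => β r t :=
  ⟨hβ.1.comp (f := fun r => (r, t)) (by fun_prop) fun _ hr => ⟨hr, ht⟩, hβ.2.1 t ht⟩

theorem le_of_le_of_le (hβ : ClassKL β) {r r' t t' : ℝ} (hr : 0 ≤ r) (hrr' : r ≤ r')
    (ht' : 0 ≤ t') (ht't : t' ≤ t) : β r t ≤ β r' t' :=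
  calc
    β r t ≤ β r t' := (hβ.2.2.1 r hr).1 ht' (ht'.trans ht't) ht't
    _ ≤ β r' t' := (hβ.classK_left ht').2.2.monotoneOn hr (hr.trans hrr') hrr'

theorem comp_classK (hβ : ClassKL β) {α : ℝ → ℝ} (hα : ClassK α) :
    ClassKL fun r t => β (α r) t := by
  obtain ⟨hcont, hmono, hdecay, hnonneg⟩ := hβ
  have hmaps : MapsTo α (Ici 0) (Ici 0) := fun _ => hα.nonneg
  refine ⟨?_, fun t ht => ⟨?_, ?_⟩, fun r hr => hdecay _ (hmaps hr),
    fun r hr => hnonneg _ (hmaps hr)⟩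
  · exact hcont.comp (f := Prod.map α id) (hα.1.prodMap continuousOn_id)
      (hmaps.prodMap (mapsTo_id _))
  · simp only [hα.2.1, (hmono t ht).1]
  · exact (hmono t ht).2.comp hα.2.2 hmaps

theorem comp_time (hβ : ClassKL β) {θ : ℝ → ℝ} (hcont : ContinuousOn θ (Ici 0))
    (hmono : MonotoneOn θ (Ici 0)) (hmaps : MapsTo θ (Ici 0) (Ici 0))
    (hθ : Tendsto θ atTop atTop) : ClassKL fun r t => β r (θ t) := by
  obtain ⟨hβcont, hβmono, hβdecay, hβnonneg⟩ := hβ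
  refine ⟨?_, fun t ht => hβmono _ (hmaps ht), fun r hr => ⟨?_, (hβdecay r hr).2.comp hθ⟩,
    fun r hr t ht => hβnonneg r hr _ (hmaps ht)⟩
  · exact hβcont.comp (f := Prod.map id θ) (continuousOn_id.prodMap hcont)
      ((mapsTo_id _).prodMap hmaps)
  · exact (hβdecay r hr).1.comp_MonotoneOn hmono hmaps

theorem delay (hβ : ClassKL β) (c : ℝ) : ClassKL fun r t => β r (max 0 (t - c)) :=
  hβ.comp_time (by fun_prop)
    (fun _ _ _ _ hst => max_le_max_left 0 (sub_le_sub_right hst c))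
    (fun _ _ => mem_Ici.2 (le_max_left _ _))
    (tendsto_atTop_mono (fun _ => le_max_right _ _)
      (tendsto_atTop_add_const_right atTop (-c) tendsto_id))

end ClassKL

namespace Signal

variable {M : ℕ} {E : Type*}

/-- The signal with constant value `i`; it has no switching instants, so its time sequence is
frozen at `0`. -/
def const (i : Fin M) : Signal M where
  idx _ := i
  T _ := 0
  num := 0
  T0 := rfl
  mono _ := le_rfl
  strict _ h := absurd h not_lt_zero
  frozen _ _ := rfl
  change _ h := absurd h not_lt_zero
  unbounded h := absurd h ENat.top_ne_zero.symm

theorem monotone_T (s : Signal M) : Monotone s.T :=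
  monotone_nat_of_le_succ s.mono

theorem T_nonneg (s : Signal M) (k : ℕ) : 0 ≤ s.T k :=
  s.T0.ge.trans (s.monotone_T k.zero_le)

/-- The tail `t ↦ σ(t + t_1)` of a signal `σ` after its first switching instant `t_1`. Only
meaningful for `1 ≤ σ.num`: otherwise its value is the junk entry `σ.idx 1`. -/
def tail (s : Signal M) : Signal M where
  idx k := s.idx (k + 1)
  T k := s.T (k + 1) - s.T 1
  num := s.num - 1
  T0 := sub_self _
  mono k := sub_le_sub_right (s.mono (k + 1)) _
  strict k hk := sub_lt_sub_right (s.strict (k + 1) (lt_tsub_iff_right.1 hk)) _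
  frozen k hk := by rw [s.frozen (k + 1) (tsub_le_iff_right.1 hk)]
  change k hk := s.change (k + 1) (lt_tsub_iff_right.1 hk)
  unbounded htop :=
    tendsto_atTop_add_const_right atTop (-s.T 1)
      ((tendsto_add_atTop_iff_nat 1).2 (s.unbounded (ENat.sub_eq_top_iff.1 htop).1))

theorem lt_num_tail (s : Signal M) {k : ℕ} : (k : ℕ∞) < s.tail.num ↔ ((k + 1 : ℕ) : ℕ∞) < s.num :=
  lt_tsub_iff_right

theorem le_num_tail {s : Signal M} (hs : 1 ≤ s.num) {k : ℕ} :
    (k : ℕ∞) ≤ s.tail.num ↔ ((k + 1 : ℕ) : ℕ∞) ≤ s.num :=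
  (ENat.addLECancellable_of_ne_top ENat.one_ne_top).le_tsub_iff_right hs

theorem bddAbove_setOf_T_le (s : Signal M) (t : ℝ) :
    BddAbove {k : ℕ | (k : ℕ∞) ≤ s.num ∧ s.T k ≤ t} := by
  by_cases hnum : s.num = ⊤
  · obtain ⟨K, hK⟩ := ((s.unbounded hnum).eventually_gt_atTop t).exists
    exact ⟨K, fun k hk => (s.monotone_T.reflect_lt (hk.2.trans_lt hK)).le⟩
  · exact ⟨s.num.toNat, fun k hk =>
      ENat.natCast_le_natCast.1 (hk.1.trans_eq (ENat.natCast_toNat hnum).symm)⟩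

theorem isGreatest_seg (s : Signal M) {t : ℝ} (ht : 0 ≤ t) :
    IsGreatest {k : ℕ | (k : ℕ∞) ≤ s.num ∧ s.T k ≤ t} (s.seg t) :=
  ⟨Nat.sSup_mem ⟨0, zero_le, s.T0.trans_le ht⟩ (s.bddAbove_setOf_T_le t),
    fun _ hk => le_csSup (s.bddAbove_setOf_T_le t) hk⟩

theorem seg_eq_zero (s : Signal M) {t : ℝ} (ht : 0 ≤ t) (hfirst : 1 ≤ s.num → t < s.T 1) :
    s.seg t = 0 := by
  obtain ⟨hnum, hT⟩ := (s.isGreatest_seg ht).1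
  by_contra hseg
  have hone : 1 ≤ s.seg t := Nat.one_le_iff_ne_zero.2 hseg
  exact (hfirst (le_trans (mod_cast hone) hnum)).not_ge ((s.monotone_T hone).trans hT)

theorem seg_eq_seg_tail_add_one {s : Signal M} (hs : 1 ≤ s.num) {t : ℝ} (ht : s.T 1 ≤ t) :
    s.seg t = s.tail.seg (t - s.T 1) + 1 := by
  obtain ⟨⟨hnum, hT⟩, hgreatest⟩ := s.tail.isGreatest_seg (sub_nonneg.2 ht)
  refine (s.isGreatest_seg ((s.T_nonneg 1).trans ht)).unique
    ⟨⟨(le_num_tail hs).1 hnum, (sub_le_sub_iff_right _).1 hT⟩, ?_⟩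
  rintro (_ | k) ⟨hk, hTk⟩
  · exact Nat.zero_le _
  · exact Nat.succ_le_succ (hgreatest ⟨(le_num_tail hs).2 hk, sub_le_sub_right hTk _⟩)

variable (Φ : Fin M → ℝ → E → E)

theorem state_succ_eq_state_tail {s : Signal M} (hs : 1 ≤ s.num) (x : E) (k : ℕ) :
    s.state Φ x (k + 1) = s.tail.state Φ (Φ (s.idx 0) (s.T 1) x) k := by
  induction k with
  | zero => simp [state, s.T0, zero_lt_one.trans_le hs]
  | succ k ih =>
    rw [state, ih, state]
    simp only [lt_num_tail]
    simp only [tail, sub_sub_sub_cancel_right]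

theorem sol_of_lt_first_switch (s : Signal M) {t : ℝ} (ht : 0 ≤ t)
    (hfirst : 1 ≤ s.num → t < s.T 1) (x : E) : s.sol Φ t x = Φ (s.idx 0) t x := by
  rw [sol, s.seg_eq_zero ht hfirst, state, s.T0, sub_zero]

theorem sol_of_first_switch_le {s : Signal M} (hs : 1 ≤ s.num) {t : ℝ} (ht : s.T 1 ≤ t) (x : E) :
    s.sol Φ t x = s.tail.sol Φ (t - s.T 1) (Φ (s.idx 0) (s.T 1) x) := by
  rw [sol, seg_eq_seg_tail_add_one hs ht, state_succ_eq_state_tail Φ hs, sol]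
  simp only [tail, sub_sub_sub_cancel_right]

theorem sol_const (i : Fin M) {t : ℝ} (ht : 0 ≤ t) (x : E) : (const i).sol Φ t x = Φ i t x :=
  (const i).sol_of_lt_first_switch Φ ht (fun h => absurd h (by simp [const])) x

end Signal

section DwellTime

variable {M : ℕ} {τ1 τ2 : ℝ}

theorem Sdw_subset_SdwStar : Sdw M τ1 τ2 ⊆ SdwStar M τ1 τ2 := fun s hs =>
  ⟨fun k _ hk => hs k hk, fun hnum => by
    simpa only [zero_add, s.T0, sub_zero] using (hs 0 (zero_lt_one.trans_le hnum)).2⟩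

theorem const_mem_Sdw (i : Fin M) : Signal.const i ∈ Sdw M τ1 τ2 :=
  fun _ hk => absurd hk not_lt_zero

theorem tail_mem_Sdw {s : Signal M} (hs : s ∈ SdwStar M τ1 τ2) : s.tail ∈ Sdw M τ1 τ2 := by
  intro k hk
  simpa only [Signal.tail, sub_sub_sub_cancel_right] using
    hs.1 (k + 1) k.succ_pos (s.lt_num_tail.1 hk)

end DwellTime

namespace GUAS

variable {M : ℕ} {E : Type*} [NormedAddCommGroup E] {Φ : Fin M → ℝ → E → E}
  {S S' : Set (Signal M)}

theorem mono (hS : S' ⊆ S) (h : GUAS Φ S) : GUAS Φ S' :=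
  let ⟨β, hβ, hbound⟩ := h
  ⟨β, hβ, fun s hs => hbound s (hS hs)⟩

theorem of_tail (h : GUAS Φ S) (hconst : ∀ i, Signal.const i ∈ S) {c : ℝ}
    (htail : ∀ s ∈ S', 1 ≤ s.num → s.T 1 ≤ c ∧ s.tail ∈ S) : GUAS Φ S' := by
  obtain ⟨β, hβ, hbound⟩ := h
  have hflow (i : Fin M) (x : E) {t : ℝ} (ht : 0 ≤ t) : ‖Φ i t x‖ ≤ β ‖x‖ t := by
    simpa only [Signal.sol_const Φ i ht] using hbound _ (hconst i) x t ht
  have hα : ClassK fun r => β r 0 := hβ.classK_left le_rfl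
  -- For `c < 0` the bound `max 0 (t - c)` would exceed `t`, hence the absolute value.
  refine ⟨fun r t => β (r + β r 0) (max 0 (t - |c|)),
    (hβ.delay |c|).comp_classK (classK_id.add hα), fun s hs x t ht => ?_⟩
  by_cases hfirst : 1 ≤ s.num → t < s.T 1
  · calc
      ‖s.sol Φ t x‖ = ‖Φ (s.idx 0) t x‖ := by rw [s.sol_of_lt_first_switch Φ ht hfirst]
      _ ≤ β ‖x‖ t := hflow _ x ht
      _ ≤ β (‖x‖ + β ‖x‖ 0) (max 0 (t - |c|)) :=
        hβ.le_of_le_of_le (norm_nonneg x)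
          (le_add_of_nonneg_right (hα.nonneg (norm_nonneg x))) (le_max_left _ _)
          (max_le ht (sub_le_self t (abs_nonneg c)))
  · push Not at hfirst
    obtain ⟨hnum, hT⟩ := hfirst
    obtain ⟨hc, hmem⟩ := htail s hs hnum
    have hstate : ‖Φ (s.idx 0) (s.T 1) x‖ ≤ β ‖x‖ 0 :=
      (hflow _ x (s.T_nonneg 1)).trans
        (hβ.le_of_le_of_le (norm_nonneg x) le_rfl le_rfl (s.T_nonneg 1))
    calc
      ‖s.sol Φ t x‖ = ‖s.tail.sol Φ (t - s.T 1) (Φ (s.idx 0) (s.T 1) x)‖ := by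
        rw [Signal.sol_of_first_switch_le Φ hnum hT]
      _ ≤ β ‖Φ (s.idx 0) (s.T 1) x‖ (t - s.T 1) := hbound _ hmem _ _ (sub_nonneg.2 hT)
      _ ≤ β (‖x‖ + β ‖x‖ 0) (max 0 (t - |c|)) :=
        hβ.le_of_le_of_le (norm_nonneg _) (hstate.trans (le_add_of_nonneg_left (norm_nonneg x)))
          (le_max_left _ _)
          (max_le (sub_nonneg.2 hT) (sub_le_sub_left (hc.trans (le_abs_self c)) t))

end GUAS

theorem guas_Sdw_iff_guas_SdwStar_general {M : ℕ} {E : Type*} [NormedAddCommGroup E]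
    (Φ : Fin M → ℝ → E → E) (τ1 τ2 : ℝ) :
    GUAS Φ (Sdw M τ1 τ2) ↔ GUAS Φ (SdwStar M τ1 τ2) :=
  ⟨fun h => h.of_tail const_mem_Sdw fun _ hs hnum => ⟨hs.2 hnum, tail_mem_Sdw hs⟩,
    GUAS.mono Sdw_subset_SdwStar⟩

/-- Lemma 1: for `τ2 ≥ τ1 ≥ 0`, the switched system is GUAS on
`S_dw(τ1,τ2)` if and only if it is GUAS on `S*_dw(τ1,τ2)`. -/
theorem guas_Sdw_iff_guas_SdwStar {n M : ℕ}
    (f : Fin M → EuclideanSpace ℝ (Fin n) → EuclideanSpace ℝ (Fin n))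
    (Φ : Fin M → ℝ → EuclideanSpace ℝ (Fin n) → EuclideanSpace ℝ (Fin n))
    (hlip : ∀ i, LocallyLipschitz (f i))
    (hf0 : ∀ i, f i 0 = 0)
    (hΦ0 : ∀ i x, Φ i 0 x = x)
    (hode : ∀ i x t, HasDerivAt (fun τ => Φ i τ x) (f i (Φ i t x)) t)
    (huniq : ∀ i (γ : ℝ → EuclideanSpace ℝ (Fin n)),
        (∀ t, HasDerivAt γ (f i (γ t)) t) → ∀ t, γ t = Φ i t (γ 0))
    (τ1 τ2 : ℝ) (hτ1 : 0 ≤ τ1) (hτ12 : τ1 ≤ τ2) :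
    GUAS Φ (Sdw M τ1 τ2) ↔ GUAS Φ (SdwStar M τ1 τ2) :=
  guas_Sdw_iff_guas_SdwStar_general Φ τ1 τ2
end
end

section
/- Let f : ℝ^n → ℝ^n be locally Lipschitz with f(0) = 0 and such that ẋ = f(x) has unique, forward and backward complete solutions, with flow Φ_f : ℝ × ℝ^n → ℝ^n. Let V_a, V_b : ℝ^n → [0,∞) be continuous and τ̄ > 0 be such that V_b(Φ_f(τ̄, x)) ≤ e^{−τ̄} V_a(x) for all x ∈ ℝ^n. Then there exists a continuous function U : [0,τ̄] × ℝ^n → ℝ such that (i) U(0,x) = V_a(x) and U(τ̄,x) = V_b(x) for all x ∈ ℝ^n, and (ii) U(t, Φ_f(t,x)) ≤ e^{−t} U(0,x) for all (t,x) ∈ [0,τ̄] × ℝ^n. Moreover, if there are α1, α2 of class K∞ with α1(|x|) ≤ V_s(x) ≤ α2(|x|) for all x ∈ ℝ^n and s ∈ {a,b}, then there exist α̃1, α̃2 of class K∞ with α̃1(|x|) ≤ U(t,x) ≤ α̃2(|x|) for all (t,x) ∈ [0,τ̄] × ℝ^n. -/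
open Filter Set
open scoped Classical

noncomputable section

/-!
If `y = Φ(t, x)`, then `x = Φ(-t, y)` and `Φ(τ - t, y) = Φ(τ, x)`, so both
`e^{-t} V_a(Φ(-t, y))` and `e^{τ - t} V_b(Φ(τ - t, y))` are, along trajectories, constant multiples
of `e^{-t}`, with factors `V_a(x)` and `e^τ V_b(Φ(τ, x)) ≤ V_a(x)`. Moving linearly in time from the
first function to the second gives `U`. For the class `K∞` bounds, the homeomorphisms `Φ(s, ·)`,
`|s| ≤ τ`, fix the origin, so by compactness they distort norms at most by one comparison function.
-/

section IntegralCurves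

open scoped Topology

theorem exists_dist_le_mul_near_isCompact {X Y : Type*} [PseudoMetricSpace X]
    [PseudoMetricSpace Y] {f : X → Y} (hf : LocallyLipschitz f) {S : Set X} (hS : IsCompact S) :
    ∃ K ≥ (0 : ℝ), ∃ δ > 0, ∀ x ∈ S, ∀ y, dist y x ≤ δ → dist (f y) (f x) ≤ K * dist y x := by
  refine hS.induction_on ?empty ?mono ?union ?nhds
  case empty => exact ⟨0, le_rfl, 1, one_pos, by simp⟩
  case mono =>
    rintro S T hST ⟨K, hK, δ, hδ, h⟩
    exact ⟨K, hK, δ, hδ, fun x hx => h x (hST hx)⟩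
  case union =>
    rintro S T ⟨K, hK, δ, hδ, h⟩ ⟨L, -, η, hη, h'⟩
    refine ⟨max K L, le_max_of_le_left hK, min δ η, lt_min hδ hη, ?_⟩
    rintro x (hx | hx) y hy
    · exact (h x hx y (hy.trans (min_le_left _ _))).trans (by gcongr; exact le_max_left _ _)
    · exact (h' x hx y (hy.trans (min_le_right _ _))).trans (by gcongr; exact le_max_right _ _)
  case nhds =>
    intro x _
    obtain ⟨K, s, hs, hK⟩ := hf x
    obtain ⟨r, hr, hrs⟩ := Metric.mem_nhds_iff.1 hs
    have hball : Metric.ball x (r / 2) ∈ 𝓝 x := Metric.ball_mem_nhds x (half_pos hr)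
    refine ⟨_, mem_nhdsWithin_of_mem_nhds hball, K, K.2, r / 2, half_pos hr, fun z hz y hy => ?_⟩
    rw [Metric.mem_ball] at hz
    refine hK.dist_le_mul y (hrs ?_) z (hrs ?_)
    · exact Metric.mem_ball.2 (by linarith [dist_triangle y z x])
    · exact Metric.mem_ball.2 (by linarith)

variable {E : Type*} [NormedAddCommGroup E] [NormedSpace ℝ E] {v : E → E}

/-- A strict version of Grönwall's estimate: since `exp ((K + 1) t)` grows strictly faster than the
Lipschitz bound allows, `γ` cannot leave the tube of radius `δ` on which this bound holds. -/
theorem dist_le_mul_exp_of_isIntegralCurve {γ γ₀ : ℝ → E} (hγ : IsIntegralCurve γ fun _ => v)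
    (hγ₀ : IsIntegralCurve γ₀ fun _ => v) {K δ ε T : ℝ} (hK : 0 ≤ K) (hε : 0 < ε)
    (hv : ∀ t ∈ Icc 0 T, ∀ y, dist y (γ₀ t) ≤ δ → dist (v y) (v (γ₀ t)) ≤ K * dist y (γ₀ t))
    (h0 : dist (γ 0) (γ₀ 0) ≤ ε) (hδ : ε * Real.exp ((K + 1) * T) ≤ δ) :
    ∀ t ∈ Icc 0 T, dist (γ t) (γ₀ t) ≤ ε * Real.exp ((K + 1) * t) := by
  have hbarrier (t : ℝ) : HasDerivAt (fun t => ε * Real.exp ((K + 1) * t))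
      ((K + 1) * (ε * Real.exp ((K + 1) * t))) t := by
    simpa only [mul_comm (Real.exp _), mul_left_comm ε] using
      (hasDerivAt_const_mul (K + 1)).exp.const_mul ε
  simp only [dist_eq_norm] at hv h0 ⊢
  refine image_norm_le_of_norm_deriv_right_lt_deriv_boundary
    (hγ.continuous.sub hγ₀.continuous).continuousOn
    (fun t _ => ((hγ t).sub (hγ₀ t)).hasDerivWithinAt) (by simpa using h0) hbarrier ?_
  intro t ht heq
  have hmem : ‖γ t - γ₀ t‖ ≤ δ := by
    refine (heq.le.trans ?_).trans hδ
    gcongr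
    exact ht.2.le
  calc ‖v (γ t) - v (γ₀ t)‖ ≤ K * ‖γ t - γ₀ t‖ := hv t (Ico_subset_Icc_self ht) _ hmem
    _ = K * (ε * Real.exp ((K + 1) * t)) := by rw [← heq]; rfl
    _ < (K + 1) * (ε * Real.exp ((K + 1) * t)) := by
      gcongr
      exact lt_add_one K

variable {Φ : ℝ → E → E}

theorem tendstoUniformlyOn_Icc_of_isIntegralCurve (hv : LocallyLipschitz v)
    (hΦ0 : ∀ x, Φ 0 x = x) (hΦ : ∀ x, IsIntegralCurve (fun t => Φ t x) fun _ => v) (x : E) (T : ℝ) :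
    TendstoUniformlyOn (fun y t => Φ t y) (fun t => Φ t x) (𝓝 x) (Icc 0 T) := by
  obtain ⟨K, hK, δ, hδ, hlip⟩ :=
    exists_dist_le_mul_near_isCompact hv ((isCompact_Icc (a := 0) (b := T)).image (hΦ x).continuous)
  rw [Metric.tendstoUniformlyOn_iff]
  intro r hr
  set M := Real.exp ((K + 1) * T)
  obtain ⟨ε, hε, hεM⟩ : ∃ ε > 0, ε * M < min δ r :=
    ⟨min δ r / M / 2, by positivity, by
      rw [div_right_comm, div_mul_cancel₀ _ (Real.exp_ne_zero _)]
      exact half_lt_self (lt_min hδ hr)⟩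
  filter_upwards [Metric.closedBall_mem_nhds x hε] with y hy t ht
  rw [dist_comm]
  calc dist (Φ t y) (Φ t x) ≤ ε * Real.exp ((K + 1) * t) :=
        dist_le_mul_exp_of_isIntegralCurve (hΦ y) (hΦ x) hK hε
          (fun s hs => hlip _ (mem_image_of_mem _ hs))
          (by simpa only [hΦ0] using Metric.mem_closedBall.1 hy)
          (hεM.le.trans (min_le_left _ _)) t ht
    _ ≤ ε * M := by
      simp only [M]
      gcongr
      exact ht.2
    _ < r := hεM.trans_le (min_le_right _ _)

theorem tendstoUniformlyOn_Icc_neg_of_isIntegralCurve (hv : LocallyLipschitz v)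
    (hΦ0 : ∀ x, Φ 0 x = x) (hΦ : ∀ x, IsIntegralCurve (fun t => Φ t x) fun _ => v) (x : E) (T : ℝ) :
    TendstoUniformlyOn (fun y t => Φ t y) (fun t => Φ t x) (𝓝 x) (Icc (-T) T) := by
  have hreversed (y : E) : IsIntegralCurve (fun t => Φ (-t) y) fun _ => -v := by
    simpa [Function.comp_def] using! (hΦ y).comp_mul (-1)
  have hforward := tendstoUniformlyOn_Icc_of_isIntegralCurve hv hΦ0 hΦ x T
  have hbackward := tendstoUniformlyOn_Icc_of_isIntegralCurve (Φ := fun t => Φ (-t)) hv.neg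
    (by simpa only [neg_zero] using hΦ0) hreversed x T
  intro u hu
  filter_upwards [hforward u hu, hbackward u hu] with y hyf hyb t ht
  rcases le_total 0 t with h | h
  · exact hyf t ⟨h, ht.2⟩
  · simpa only [neg_neg] using hyb (-t) ⟨neg_nonneg.2 h, neg_le.1 ht.1⟩

theorem continuous_uncurry_of_isIntegralCurve (hv : LocallyLipschitz v) (hΦ0 : ∀ x, Φ 0 x = x)
    (hΦ : ∀ x, IsIntegralCurve (fun t => Φ t x) fun _ => v) : Continuous ↿Φ := by
  rw [continuous_iff_continuousAt]
  rintro ⟨t, x⟩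
  have hnhds : Icc (-(|t| + 1)) (|t| + 1) ∈ 𝓝 t :=
    Icc_mem_nhds (by linarith [neg_abs_le t]) (by linarith [le_abs_self t])
  have hunif := tendstoUniformlyOn_Icc_neg_of_isIntegralCurve hv hΦ0 hΦ x (|t| + 1)
  exact tendsto_comp_of_locally_uniform_limit (F := fun p s => Φ s p.2) (g := Prod.fst)
    (hΦ x).continuous.continuousAt (continuous_fst.tendsto (t, x)) fun u hu =>
      ⟨_, hnhds, (continuous_snd.tendsto (t, x)).eventually (hunif u hu)⟩

/-- The flow of a locally Lipschitz autonomous vector field whose integral curves are global, as a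
bundled continuous action of `ℝ`. -/
def integralFlow (hv : LocallyLipschitz v) (hΦ0 : ∀ x, Φ 0 x = x)
    (hΦ : ∀ x, IsIntegralCurve (fun t => Φ t x) fun _ => v)
    (huniq : ∀ γ : ℝ → E, IsIntegralCurve γ (fun _ => v) → ∀ t, γ t = Φ t (γ 0)) : Flow ℝ E where
  toFun := Φ
  cont' := continuous_uncurry_of_isIntegralCurve hv hΦ0 hΦ
  map_add' s t x := by simpa using huniq _ ((hΦ x).comp_add t) s
  map_zero' := hΦ0

end IntegralCurves

section Interpolant

variable {X : Type*} [TopologicalSpace X] (ϕ : Flow ℝ X) (Va Vb : X → ℝ) (τ : ℝ)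

/-- The function `U` of the interpolation lemma: the linear interpolation, with weight `t / τ`,
between `e^{-t} V_a` and `e^{τ - t} V_b`, evaluated at the points which the trajectory that is at
`x` at time `t` visits at times `0` and `τ`. -/
def interpolant (t : ℝ) (x : X) : ℝ :=
  Real.exp (-t) * AffineMap.lineMap (Va (ϕ (-t) x)) (Real.exp τ * Vb (ϕ (τ - t) x)) (t / τ)

variable {Va Vb τ}

theorem continuous_interpolant (hVa : Continuous Va) (hVb : Continuous Vb) :
    Continuous ↿(interpolant ϕ Va Vb τ) := by
  change Continuous fun p : ℝ × X => interpolant ϕ Va Vb τ p.1 p.2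
  unfold interpolant
  fun_prop

theorem interpolant_zero (x : X) : interpolant ϕ Va Vb τ 0 x = Va x := by
  simp [interpolant]

theorem interpolant_self (hτ : τ ≠ 0) (x : X) : interpolant ϕ Va Vb τ τ x = Vb x := by
  simp [interpolant, hτ, ← mul_assoc, ← Real.exp_add]

theorem interpolant_map_le (hτ : 0 ≤ τ) {x : X} (hdec : Vb (ϕ τ x) ≤ Real.exp (-τ) * Va x) {t : ℝ}
    (ht : t ∈ Icc 0 τ) : interpolant ϕ Va Vb τ t (ϕ t x) ≤ Real.exp (-t) * Va x := by
  have hb : Real.exp τ * Vb (ϕ τ x) ≤ Va x := by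
    rwa [Real.exp_neg, inv_mul_eq_div, le_div_iff₀' (Real.exp_pos τ)] at hdec
  rw [interpolant, ← ϕ.map_add, ← ϕ.map_add, neg_add_cancel, sub_add_cancel, ϕ.map_zero_apply]
  gcongr
  exact (convex_Iic (Va x)).lineMap_mem self_mem_Iic hb
    ⟨div_nonneg ht.1 hτ, div_le_one_of_le₀ ht.2 hτ⟩

theorem interpolant_mem_Icc {t : ℝ} (ht : t ∈ Icc 0 τ) {x : X} {a b : ℝ} (ha : 0 ≤ a)
    (hVa : Va (ϕ (-t) x) ∈ Icc a b) (hVb : Vb (ϕ (τ - t) x) ∈ Icc a b) :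
    interpolant ϕ Va Vb τ t x ∈ Icc (Real.exp (-τ) * a) (Real.exp τ * b) := by
  have hτ : 0 ≤ τ := ht.1.trans ht.2
  have hb : 0 ≤ b := ha.trans (hVa.1.trans hVa.2)
  have hexp : 1 ≤ Real.exp τ := Real.one_le_exp hτ
  have hline : AffineMap.lineMap (Va (ϕ (-t) x)) (Real.exp τ * Vb (ϕ (τ - t) x)) (t / τ) ∈
      Icc a (Real.exp τ * b) := by
    refine (convex_Icc _ _).lineMap_mem ⟨hVa.1, hVa.2.trans (le_mul_of_one_le_left hb hexp)⟩
      ⟨hVb.1.trans (le_mul_of_one_le_left (ha.trans hVb.1) hexp), ?_⟩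
      ⟨div_nonneg ht.1 hτ, div_le_one_of_le₀ ht.2 hτ⟩
    gcongr
    exact hVb.2
  constructor
  · exact mul_le_mul (Real.exp_le_exp.2 (neg_le_neg ht.2)) hline.1 ha (Real.exp_pos _).le
  · calc interpolant ϕ Va Vb τ t x ≤ Real.exp (-t) * (Real.exp τ * b) := by
          unfold interpolant
          gcongr
          exact hline.2
      _ ≤ Real.exp τ * b :=
        mul_le_of_le_one_left (by positivity) (Real.exp_le_one_iff.2 (neg_nonpos.2 ht.1))

end Interpolant

section RadialSup

open scoped Pointwise

variable {S E F : Type*} [NormedAddCommGroup E] [NormedSpace ℝ E] [SeminormedAddCommGroup F]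
  {K : Set S} {g : S → E → F}

/-- The largest norm that the maps `g s`, `s ∈ K`, attain on the closed ball of radius `|r|`. The
ball is written as `r` times the unit ball so that the supremum is over a set independent of `r`. -/
def radialSup (K : Set S) (g : S → E → F) (r : ℝ) : ℝ :=
  sSup ((fun p : S × E => ‖g p.1 (r • p.2)‖) '' K ×ˢ Metric.closedBall 0 1)

theorem radialSup_nonneg (r : ℝ) : 0 ≤ radialSup K g r :=
  Real.sSup_nonneg (forall_mem_image.2 fun _ _ => norm_nonneg _)

theorem radialSup_zero (h0 : ∀ s ∈ K, g s 0 = 0) : radialSup K g 0 = 0 := by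
  refine le_antisymm (Real.sSup_le (forall_mem_image.2 fun p hp => ?_) le_rfl) (radialSup_nonneg 0)
  simp [h0 p.1 hp.1]

variable [TopologicalSpace S] [ProperSpace E]

theorem continuous_radialSup (hK : IsCompact K) (hg : Continuous ↿g) :
    Continuous (radialSup K g) := by
  refine (hK.prod (isCompact_closedBall 0 1)).continuous_sSup ?_
  exact (hg.comp (f := fun q : ℝ × S × E => (q.2.1, q.1 • q.2.2)) (by fun_prop)).norm

theorem norm_le_radialSup (hK : IsCompact K) (hg : Continuous ↿g) {s : S} (hs : s ∈ K) {x : E}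
    {r : ℝ} (hx : ‖x‖ ≤ r) : ‖g s x‖ ≤ radialSup K g r := by
  have hr : 0 ≤ r := (norm_nonneg x).trans hx
  have hbdd : BddAbove ((fun p : S × E => ‖g p.1 (r • p.2)‖) '' K ×ˢ Metric.closedBall 0 1) :=
    (hK.prod (isCompact_closedBall 0 1)).bddAbove_image
      (hg.comp (f := fun p : S × E => (p.1, r • p.2)) (by fun_prop)).norm.continuousOn
  obtain ⟨u, hu, rfl⟩ : x ∈ r • Metric.closedBall (0 : E) 1 := by
    rwa [smul_unitClosedBall_of_nonneg hr, mem_closedBall_zero_iff]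
  exact le_csSup hbdd ⟨(s, u), ⟨hs, hu⟩, rfl⟩

theorem monotoneOn_radialSup (hK : IsCompact K) (hg : Continuous ↿g) :
    MonotoneOn (radialSup K g) (Ici 0) := by
  intro r hr r' _ hrr'
  refine Real.sSup_le (forall_mem_image.2 ?_) (radialSup_nonneg r')
  rintro ⟨s, u⟩ ⟨hs, hu⟩
  refine norm_le_radialSup hK hg hs ?_
  rw [norm_smul, Real.norm_of_nonneg hr]
  exact (mul_le_of_le_one_right hr (mem_closedBall_zero_iff.1 hu)).trans hrr'

theorem exists_orderIso_norm_le (hK : IsCompact K) (hg : Continuous ↿g)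
    (h0 : ∀ s ∈ K, g s 0 = 0) :
    ∃ ρ : ℝ ≃o ℝ, ρ 0 = 0 ∧ ∀ s ∈ K, ∀ x, ‖g s x‖ ≤ ρ ‖x‖ := by
  set ρ : ℝ → ℝ := fun r => r + radialSup K g (max r 0)
  have hmono : StrictMono ρ := strictMono_id.add_monotone fun r r' h =>
    monotoneOn_radialSup hK hg (le_max_right r 0) (le_max_right r' 0) (max_le_max_right 0 h)
  have hcont : Continuous ρ :=
    continuous_id.add ((continuous_radialSup hK hg).comp (continuous_id.max continuous_const))
  have hneg {r : ℝ} (hr : r ≤ 0) : ρ r = r := by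
    simp only [ρ, max_eq_right hr, radialSup_zero h0, add_zero]
  have hsurj : Function.Surjective ρ := hcont.surjective
    (tendsto_atTop_mono (fun r => le_add_of_nonneg_right (radialSup_nonneg _)) tendsto_id)
    (tendsto_id.congr' ((eventually_le_atBot 0).mono fun _ hr => (hneg hr).symm))
  refine ⟨hmono.orderIsoOfSurjective ρ hsurj, hneg le_rfl, fun s hs x => ?_⟩
  exact (norm_le_radialSup hK hg hs (le_max_left _ _)).trans (le_add_of_nonneg_left (norm_nonneg x))

theorem exists_orderIso_norm_flow_mem_Icc (ϕ : Flow ℝ E) (h0 : ∀ t, ϕ t 0 = 0) (τ : ℝ) :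
    ∃ ρ : ℝ ≃o ℝ, ρ 0 = 0 ∧
      ∀ s ∈ Icc (-τ) τ, ∀ x, ‖ϕ s x‖ ∈ Icc (ρ.symm ‖x‖) (ρ ‖x‖) := by
  obtain ⟨ρ, hρ0, hρ⟩ :=
    exists_orderIso_norm_le (isCompact_Icc (a := -τ) (b := τ)) ϕ.cont' fun t _ => h0 t
  refine ⟨ρ, hρ0, fun s hs x => ⟨?_, hρ s hs x⟩⟩
  rw [OrderIso.symm_apply_le]
  have hback : ‖ϕ (-s) (ϕ s x)‖ ≤ ρ ‖ϕ s x‖ := hρ (-s) ⟨neg_le_neg hs.2, neg_le.1 hs.1⟩ _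
  rwa [← ϕ.map_add, neg_add_cancel, ϕ.map_zero_apply] at hback

end RadialSup

namespace ClassKInf

variable {α : ℝ → ℝ}

theorem monotoneOn (hα : ClassKInf α) : MonotoneOn α (Ici 0) :=
  hα.2.2.1.monotoneOn

theorem nonneg (hα : ClassKInf α) {r : ℝ} (hr : 0 ≤ r) : 0 ≤ α r :=
  hα.2.2.2.2 r hr

theorem const_mul (hα : ClassKInf α) {c : ℝ} (hc : 0 < c) : ClassKInf fun r => c * α r :=
  ⟨continuousOn_const.mul hα.1, by simp only [hα.2.1, mul_zero],
    fun _ ha _ hb hab => mul_lt_mul_of_pos_left (hα.2.2.1 ha hb hab) hc,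
    hα.2.2.2.1.const_mul_atTop hc, fun _ hr => mul_nonneg hc.le (hα.nonneg hr)⟩

theorem comp_orderIso (hα : ClassKInf α) {ρ : ℝ ≃o ℝ} (hρ : ρ 0 = 0) :
    ClassKInf fun r => α (ρ r) := by
  have hmaps : MapsTo ρ (Ici 0) (Ici 0) := fun r hr => by
    simpa only [hρ] using! ρ.monotone hr
  exact ⟨hα.1.comp ρ.continuous.continuousOn hmaps, by simp only [hρ, hα.2.1],
    hα.2.2.1.comp (ρ.strictMono.strictMonoOn _) hmaps, hα.2.2.2.1.comp ρ.tendsto_atTop,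
    fun r hr => hα.nonneg (hmaps hr)⟩

end ClassKInf

theorem exists_classKInf_interpolant_mem_Icc {E : Type*} [NormedAddCommGroup E] [NormedSpace ℝ E]
    [ProperSpace E] (ϕ : Flow ℝ E) (h0 : ∀ t, ϕ t 0 = 0) (Va Vb : E → ℝ) (τ : ℝ) {α1 α2 : ℝ → ℝ}
    (hα1 : ClassKInf α1) (hα2 : ClassKInf α2)
    (hV : ∀ x, (α1 ‖x‖ ≤ Va x ∧ Va x ≤ α2 ‖x‖) ∧ (α1 ‖x‖ ≤ Vb x ∧ Vb x ≤ α2 ‖x‖)) :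
    ∃ α1' α2' : ℝ → ℝ, ClassKInf α1' ∧ ClassKInf α2' ∧ ∀ t ∈ Icc (0 : ℝ) τ, ∀ x,
      α1' ‖x‖ ≤ interpolant ϕ Va Vb τ t x ∧ interpolant ϕ Va Vb τ t x ≤ α2' ‖x‖ := by
  obtain ⟨ρ, hρ0, hρ⟩ := exists_orderIso_norm_flow_mem_Icc ϕ h0 τ
  have hρs0 : ρ.symm 0 = 0 := by rw [OrderIso.symm_apply_eq, hρ0]
  refine ⟨fun r => Real.exp (-τ) * α1 (ρ.symm r), fun r => Real.exp τ * α2 (ρ r),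
    (hα1.comp_orderIso hρs0).const_mul (Real.exp_pos _),
    (hα2.comp_orderIso hρ0).const_mul (Real.exp_pos _), fun t ht x => ?_⟩
  have hρx : 0 ≤ ρ.symm ‖x‖ := hρs0 ▸ ρ.symm.monotone (norm_nonneg x)
  have hbounds {s : ℝ} (hs : s ∈ Icc (-τ) τ) :
      Icc (α1 ‖ϕ s x‖) (α2 ‖ϕ s x‖) ⊆ Icc (α1 (ρ.symm ‖x‖)) (α2 (ρ ‖x‖)) :=
    Icc_subset_Icc (hα1.monotoneOn hρx (norm_nonneg _) (hρ s hs x).1)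
      (hα2.monotoneOn (norm_nonneg _) ((norm_nonneg _).trans (hρ s hs x).2) (hρ s hs x).2)
  exact interpolant_mem_Icc ϕ ht (hα1.nonneg hρx)
    (hbounds ⟨by linarith [ht.2], by linarith [ht.1, ht.2]⟩ (hV _).1)
    (hbounds ⟨by linarith [ht.1, ht.2], by linarith [ht.1]⟩ (hV _).2)

theorem interpolation_lemma_general {E : Type*} [NormedAddCommGroup E] [NormedSpace ℝ E]
    [ProperSpace E] (ϕ : Flow ℝ E) (h0 : ∀ t, ϕ t 0 = 0) {Va Vb : E → ℝ} (hVa : Continuous Va)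
    (hVb : Continuous Vb) {τ : ℝ} (hτ : 0 < τ)
    (hdec : ∀ x, Vb (ϕ τ x) ≤ Real.exp (-τ) * Va x) :
    ∃ U : ℝ → E → ℝ, Continuous ↿U ∧
      (∀ x, U 0 x = Va x ∧ U τ x = Vb x) ∧
      (∀ t ∈ Icc (0 : ℝ) τ, ∀ x, U t (ϕ t x) ≤ Real.exp (-t) * U 0 x) ∧
      (∀ α1 α2 : ℝ → ℝ, ClassKInf α1 → ClassKInf α2 →
        (∀ x, (α1 ‖x‖ ≤ Va x ∧ Va x ≤ α2 ‖x‖) ∧ (α1 ‖x‖ ≤ Vb x ∧ Vb x ≤ α2 ‖x‖)) →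
        ∃ α1' α2' : ℝ → ℝ, ClassKInf α1' ∧ ClassKInf α2' ∧
          ∀ t ∈ Icc (0 : ℝ) τ, ∀ x, α1' ‖x‖ ≤ U t x ∧ U t x ≤ α2' ‖x‖) := by
  refine ⟨interpolant ϕ Va Vb τ, continuous_interpolant ϕ hVa hVb,
    fun x => ⟨interpolant_zero ϕ x, interpolant_self ϕ hτ.ne' x⟩, fun t ht x => ?_,
    fun α1 α2 hα1 hα2 => exists_classKInf_interpolant_mem_Icc ϕ h0 Va Vb τ hα1 hα2⟩
  rw [interpolant_zero]
  exact interpolant_map_le ϕ hτ.le (hdec x) ht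

/-- Lemma 2: interpolation of two Lyapunov-like functions `V_a, V_b`
along the flow `Φ` of `ẋ = f(x)` on a time interval `[0, τ̄]`. -/
theorem interpolation_lemma {n : ℕ}
    (f : EuclideanSpace ℝ (Fin n) → EuclideanSpace ℝ (Fin n))
    (Φ : ℝ → EuclideanSpace ℝ (Fin n) → EuclideanSpace ℝ (Fin n))
    (hlip : LocallyLipschitz f) (hf0 : f 0 = 0)
    (hΦ0 : ∀ x, Φ 0 x = x)
    (hode : ∀ x t, HasDerivAt (fun s => Φ s x) (f (Φ t x)) t)
    (huniq : ∀ γ : ℝ → EuclideanSpace ℝ (Fin n),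
      (∀ t, HasDerivAt γ (f (γ t)) t) → ∀ t, γ t = Φ t (γ 0))
    (Va Vb : EuclideanSpace ℝ (Fin n) → ℝ)
    (hVaCont : Continuous Va) (hVbCont : Continuous Vb)
    (hVaNonneg : ∀ x, 0 ≤ Va x) (hVbNonneg : ∀ x, 0 ≤ Vb x)
    (τ : ℝ) (hτ : 0 < τ)
    (hdec : ∀ x, Vb (Φ τ x) ≤ Real.exp (-τ) * Va x) :
    ∃ U : ℝ → EuclideanSpace ℝ (Fin n) → ℝ,
      ContinuousOn (fun p : ℝ × EuclideanSpace ℝ (Fin n) => U p.1 p.2)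
        (Icc 0 τ ×ˢ univ) ∧
      (∀ x, U 0 x = Va x ∧ U τ x = Vb x) ∧
      (∀ t ∈ Icc (0 : ℝ) τ, ∀ x, U t (Φ t x) ≤ Real.exp (-t) * U 0 x) ∧
      (∀ α1 α2 : ℝ → ℝ, ClassKInf α1 → ClassKInf α2 →
        (∀ x, (α1 ‖x‖ ≤ Va x ∧ Va x ≤ α2 ‖x‖) ∧ (α1 ‖x‖ ≤ Vb x ∧ Vb x ≤ α2 ‖x‖)) →
        ∃ α1' α2' : ℝ → ℝ, ClassKInf α1' ∧ ClassKInf α2' ∧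
          ∀ t ∈ Icc (0 : ℝ) τ, ∀ x, α1' ‖x‖ ≤ U t x ∧ U t x ≤ α2' ‖x‖) := by
  obtain ⟨U, hU, h⟩ := interpolation_lemma_general (integralFlow hlip hΦ0 hode huniq)
    (fun t => (huniq _ (isIntegralCurve_const fun _ => hf0) t).symm) hVaCont hVbCont hτ hdec
  exact ⟨U, hU.continuousOn, h⟩
end
end

section
/- Let f : ℝ^n → ℝ^n be locally Lipschitz with f(0) = 0 and such that ẋ = f(x) has unique, forward and backward complete solutions, with flow Φ_f. Let τ̄ > 0, K ∈ ℕ with K ≥ 1, ρ ∈ ℝ, and let V_0,…,V_K : ℝ^n → ℝ be continuously differentiable positive definite functions such that, for every k ∈ {1,…,K} and every x ∈ ℝ^n, ∇V_k(x)·f(x) + (K/τ̄)(V_k(x) − V_{k−1}(x)) ≤ ρ V_k(x) and ∇V_{k−1}(x)·f(x) + (K/τ̄)(V_k(x) − V_{k−1}(x)) ≤ ρ V_{k−1}(x). Then V_K(Φ_f(τ̄, x)) ≤ e^{ρτ̄} V_0(x) for all x ∈ ℝ^n. -/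
open Filter Set
open scoped Classical

noncomputable section

/-!
Over the `k`-th of `K` equal time slices, slide linearly from `V_{k-1}` to `V_k` along the
trajectory. The derivative of the interpolant is a convex combination of the left-hand sides of
the two differential inequalities, the term `(K / τ) (V_k - V_{k-1})` being the rate of the slide
itself. Grönwall then bounds `V_k` at the end of the slice by `e^{ρτ/K}` times `V_{k-1}` at its
start, and these bounds telescope.
-/

section ScalarInequalities

variable {ρ s t : ℝ}

theorem le_exp_mul_of_deriv_le_mul {w w' : ℝ → ℝ} (hst : s ≤ t)
    (hw : ∀ r ∈ Icc s t, HasDerivWithinAt w (w' r) (Icc s t) r)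
    (hw' : ∀ r ∈ Ico s t, w' r ≤ ρ * w r) :
    w t ≤ Real.exp (ρ * (t - s)) * w s := by
  have hw_right : ∀ r ∈ Ico s t, HasDerivWithinAt w (w' r) (Ici r) r := fun r hr =>
    (hw r (Ico_subset_Icc_self hr)).mono_of_mem_nhdsWithin (Icc_mem_nhdsGE_of_mem hr)
  have hgronwall : w t ≤ gronwallBound (w s) ρ 0 (t - s) :=
    le_gronwallBound_of_liminf_deriv_right_le (fun r hr => (hw r hr).continuousWithinAt)
      (fun r hr _ => (hw_right r hr).liminf_right_slope_le) le_rfl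
      (fun r hr => (hw' r hr).trans_eq (add_zero _).symm) t (right_mem_Icc.2 hst)
  rwa [gronwallBound_ε0, mul_comm] at hgronwall

theorem le_exp_mul_of_deriv_add_sub_div_le {a b a' b' : ℝ → ℝ} (hst : s < t)
    (ha : ∀ r ∈ Icc s t, HasDerivWithinAt a (a' r) (Icc s t) r)
    (hb : ∀ r ∈ Icc s t, HasDerivWithinAt b (b' r) (Icc s t) r)
    (ha' : ∀ r ∈ Ico s t, a' r + (b r - a r) / (t - s) ≤ ρ * a r)
    (hb' : ∀ r ∈ Ico s t, b' r + (b r - a r) / (t - s) ≤ ρ * b r) :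
    b t ≤ Real.exp (ρ * (t - s)) * a s := by
  have hlen : 0 < t - s := sub_pos.2 hst
  let θ : ℝ → ℝ := fun r => (r - s) / (t - s)
  let w : ℝ → ℝ := fun r => a r + θ r * (b r - a r)
  have hw : ∀ r ∈ Icc s t, HasDerivWithinAt w
      (a' r + (1 / (t - s) * (b r - a r) + θ r * (b' r - a' r))) (Icc s t) r := fun r hr =>
    have hθ : HasDerivWithinAt θ (1 / (t - s)) (Icc s t) r :=
      ((hasDerivWithinAt_id r _).sub_const s).div_const (t - s)
    (ha r hr).add (hθ.mul ((hb r hr).sub (ha r hr)))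
  have hw' : ∀ r ∈ Ico s t,
      a' r + (1 / (t - s) * (b r - a r) + θ r * (b' r - a' r)) ≤ ρ * w r := by
    intro r hr
    have hθ_nonneg : 0 ≤ θ r := div_nonneg (sub_nonneg.2 hr.1) hlen.le
    have hθ_compl_nonneg : 0 ≤ 1 - θ r :=
      sub_nonneg.2 ((div_le_one hlen).2 (sub_le_sub_right hr.2.le s))
    calc a' r + (1 / (t - s) * (b r - a r) + θ r * (b' r - a' r))
        = (1 - θ r) * (a' r + (b r - a r) / (t - s))
          + θ r * (b' r + (b r - a r) / (t - s)) := by ring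
      _ ≤ (1 - θ r) * (ρ * a r) + θ r * (ρ * b r) :=
          add_le_add (mul_le_mul_of_nonneg_left (ha' r hr) hθ_compl_nonneg)
            (mul_le_mul_of_nonneg_left (hb' r hr) hθ_nonneg)
      _ = ρ * w r := by ring
  have hws : w s = a s := by simp [w, θ]
  have hwt : w t = b t := by simp [w, θ, hlen.ne']
  simpa only [hws, hwt] using le_exp_mul_of_deriv_le_mul hst.le hw hw'

theorem le_exp_mul_of_deriv_add_sub_div_le_chain {v v' : ℕ → ℝ → ℝ} {T : ℕ → ℝ} {K : ℕ}
    (hT : ∀ k < K, T k < T (k + 1))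
    (hv : ∀ k < K, ∀ r ∈ Icc (T k) (T (k + 1)),
      HasDerivWithinAt (v k) (v' k r) (Icc (T k) (T (k + 1))) r)
    (hv_succ : ∀ k < K, ∀ r ∈ Icc (T k) (T (k + 1)),
      HasDerivWithinAt (v (k + 1)) (v' (k + 1) r) (Icc (T k) (T (k + 1))) r)
    (hv' : ∀ k < K, ∀ r ∈ Ico (T k) (T (k + 1)),
      v' k r + (v (k + 1) r - v k r) / (T (k + 1) - T k) ≤ ρ * v k r)
    (hv'_succ : ∀ k < K, ∀ r ∈ Ico (T k) (T (k + 1)),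
      v' (k + 1) r + (v (k + 1) r - v k r) / (T (k + 1) - T k) ≤ ρ * v (k + 1) r) :
    v K (T K) ≤ Real.exp (ρ * (T K - T 0)) * v 0 (T 0) := by
  suffices h : ∀ k ≤ K, v k (T k) ≤ Real.exp (ρ * (T k - T 0)) * v 0 (T 0) from h K le_rfl
  intro k
  induction k with
  | zero => simp
  | succ k ih =>
    intro hk
    calc v (k + 1) (T (k + 1))
        ≤ Real.exp (ρ * (T (k + 1) - T k)) * v k (T k) :=
          le_exp_mul_of_deriv_add_sub_div_le (hT k hk) (hv k hk) (hv_succ k hk) (hv' k hk)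
            (hv'_succ k hk)
      _ ≤ Real.exp (ρ * (T (k + 1) - T k)) * (Real.exp (ρ * (T k - T 0)) * v 0 (T 0)) :=
          mul_le_mul_of_nonneg_left (ih (Nat.le_of_succ_le hk)) (Real.exp_pos _).le
      _ = Real.exp (ρ * (T (k + 1) - T 0)) * v 0 (T 0) := by
          rw [← mul_assoc, ← Real.exp_add]
          ring_nf

theorem le_exp_mul_of_deriv_add_sub_div_le_uniform_chain {v v' : ℕ → ℝ → ℝ} {τ : ℝ} {K : ℕ}
    (hτ : 0 < τ) (hK : 1 ≤ K)
    (hv : ∀ k ≤ K, ∀ r ∈ Icc 0 τ, HasDerivWithinAt (v k) (v' k r) (Icc 0 τ) r)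
    (hv' : ∀ k < K, ∀ r ∈ Ico 0 τ, v' k r + K / τ * (v (k + 1) r - v k r) ≤ ρ * v k r)
    (hv'_succ : ∀ k < K, ∀ r ∈ Ico 0 τ,
      v' (k + 1) r + K / τ * (v (k + 1) r - v k r) ≤ ρ * v (k + 1) r) :
    v K τ ≤ Real.exp (ρ * τ) * v 0 0 := by
  have hK_pos : (0 : ℝ) < K := by exact_mod_cast hK
  let T : ℕ → ℝ := fun k => k * (τ / K)
  have hT_zero : T 0 = 0 := by simp [T]
  have hT_last : T K = τ := mul_div_cancel₀ τ hK_pos.ne'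
  have hT_mono : StrictMono T := fun i j hij =>
    mul_lt_mul_of_pos_right (Nat.cast_lt.2 hij) (div_pos hτ hK_pos)
  have hT_step (k : ℕ) : T (k + 1) - T k = τ / K := by simp only [T]; push_cast; ring
  have hT_nonneg (k : ℕ) : 0 ≤ T k := hT_zero ▸ hT_mono.monotone k.zero_le
  have hT_le {k : ℕ} (hk : k ≤ K) : T k ≤ τ := hT_last ▸ hT_mono.monotone hk
  have hrate (k : ℕ) (d : ℝ) : d / (T (k + 1) - T k) = K / τ * d := by
    rw [hT_step, div_div_eq_mul_div, mul_comm, mul_div_right_comm]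
  have hIcc {k : ℕ} (hk : k < K) : Icc (T k) (T (k + 1)) ⊆ Icc 0 τ :=
    Icc_subset_Icc (hT_nonneg k) (hT_le hk)
  have hIco {k : ℕ} (hk : k < K) : Ico (T k) (T (k + 1)) ⊆ Ico 0 τ :=
    Ico_subset_Ico (hT_nonneg k) (hT_le hk)
  have hchain := le_exp_mul_of_deriv_add_sub_div_le_chain (ρ := ρ)
    (fun k _ => hT_mono k.lt_succ_self)
    (fun k hk r hr => (hv k hk.le r (hIcc hk hr)).mono (hIcc hk))
    (fun k hk r hr => (hv (k + 1) hk r (hIcc hk hr)).mono (hIcc hk))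
    (fun k hk r hr => by rw [hrate]; exact hv' k hk r (hIco hk hr))
    (fun k hk r hr => by rw [hrate]; exact hv'_succ k hk r (hIco hk hr))
  simpa only [hT_zero, hT_last, sub_zero] using hchain

end ScalarInequalities

theorem gradient_chain_lemma_general {E : Type*} [NormedAddCommGroup E] [NormedSpace ℝ E]
    {f : E → E} {γ : ℝ → E} {τ ρ : ℝ} {K : ℕ} {V : ℕ → E → ℝ} (hτ : 0 < τ) (hK : 1 ≤ K)
    (hγ : IsIntegralCurveOn γ (fun _ => f) (Icc 0 τ))
    (hV : ∀ k ≤ K, ∀ t ∈ Icc 0 τ, DifferentiableAt ℝ (V k) (γ t))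
    (hineq : ∀ k < K, ∀ t ∈ Ico 0 τ,
      fderiv ℝ (V (k + 1)) (γ t) (f (γ t)) + K / τ * (V (k + 1) (γ t) - V k (γ t)) ≤
        ρ * V (k + 1) (γ t) ∧
      fderiv ℝ (V k) (γ t) (f (γ t)) + K / τ * (V (k + 1) (γ t) - V k (γ t)) ≤
        ρ * V k (γ t)) :
    V K (γ τ) ≤ Real.exp (ρ * τ) * V 0 (γ 0) :=
  have hder : ∀ k ≤ K, ∀ t ∈ Icc 0 τ, HasDerivWithinAt (V k ∘ γ)
      (fderiv ℝ (V k) (γ t) (f (γ t))) (Icc 0 τ) t := fun k hk t ht =>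
    (hV k hk t ht).hasFDerivAt.comp_hasDerivWithinAt t (hγ t ht)
  le_exp_mul_of_deriv_add_sub_div_le_uniform_chain (v := fun k => V k ∘ γ) hτ hK hder
    (fun k hk t ht => (hineq k hk t ht).2) (fun k hk t ht => (hineq k hk t ht).1)

/-- Lemma 4: the `K`-step differential inequalities on the `C¹` positive
definite functions `V_0, …, V_K` imply `V_K(Φ(τ̄,x)) ≤ e^{ρτ̄} V_0(x)`. -/
theorem gradient_chain_lemma {n : ℕ}
    (f : EuclideanSpace ℝ (Fin n) → EuclideanSpace ℝ (Fin n))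
    (Φ : ℝ → EuclideanSpace ℝ (Fin n) → EuclideanSpace ℝ (Fin n))
    (hlip : LocallyLipschitz f) (hf0 : f 0 = 0)
    (hΦ0 : ∀ x, Φ 0 x = x)
    (hode : ∀ x t, HasDerivAt (fun s => Φ s x) (f (Φ t x)) t)
    (huniq : ∀ γ : ℝ → EuclideanSpace ℝ (Fin n),
      (∀ t, HasDerivAt γ (f (γ t)) t) → ∀ t, γ t = Φ t (γ 0))
    (τbar : ℝ) (hτbar : 0 < τbar) (K : ℕ) (hK : 1 ≤ K) (ρ : ℝ)
    (V : ℕ → EuclideanSpace ℝ (Fin n) → ℝ)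
    (hV : ∀ k ≤ K, ContDiff ℝ 1 (V k))
    (hVpos : ∀ k ≤ K, V k 0 = 0 ∧ ∀ x, x ≠ 0 → 0 < V k x)
    (hineq : ∀ k, 1 ≤ k → k ≤ K → ∀ x,
      fderiv ℝ (V k) x (f x) + ((K : ℝ) / τbar) * (V k x - V (k - 1) x) ≤ ρ * V k x ∧
      fderiv ℝ (V (k - 1)) x (f x) + ((K : ℝ) / τbar) * (V k x - V (k - 1) x) ≤
        ρ * V (k - 1) x) :
    ∀ x, V K (Φ τbar x) ≤ Real.exp (ρ * τbar) * V 0 x := by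
  intro x
  simpa only [hΦ0] using gradient_chain_lemma_general hτbar hK
    (fun t _ => (hode x t).hasDerivWithinAt)
    (fun k hk t _ => (hV k hk).differentiable one_ne_zero (Φ t x))
    (fun k hk t _ => hineq (k + 1) k.succ_pos hk (Φ t x))
end
end
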